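/- Let p be a prime and let K be a field with a nontrivial nonarchimedean multiplicative norm ‖·‖ : K → ℝ≥0 such that ‖p·1_K‖ < 1 (the residue field has characteristic p). Then there exists a field L with a nonarchimedean multiplicative norm and an isometric ring embedding K → L such that: (i) L is spherically complete (every chain of closed balls in L has nonempty intersection); (ii) the value group of L is all of ℝ_{>0} (for every real r > 0 there is x ∈ L with ‖x‖ = r); and (iii) for every ϖ ∈ L with ‖p·1_L‖ ≤ ‖ϖ‖^p and 0 < ‖ϖ‖ < 1, the p-power map L°/ϖL° → L°/ϖ^pL° is surjective, i.e. for every y ∈ L with ‖y‖ ≤ 1 there is x ∈ L with ‖x‖ ≤ 1 and ‖y − x^p‖ ≤ ‖ϖ‖^p (so L is a perfectoid field). -/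

import Mathlib

/-- A field equipped with a nonarchimedean multiplicative norm valued in `ℝ≥0`. -/
structure NAField : Type 1 where
  carrier : Type
  [fieldInst : Field carrier]
  val : Valuation carrier NNReal

attribute [instance] NAField.fieldInst

/-- `L` is spherically complete: every family of closed balls that is totally ordered by
inclusion has nonempty intersection. -/
def SphericallyComplete {K : Type*} [Field K] (v : Valuation K NNReal) : Prop :=
  ∀ 𝒞 : Set (Set K), (∀ B ∈ 𝒞, ∃ (c : K) (r : NNReal), B = {x : K | v (x - c) ≤ r}) →
    IsChain (· ⊆ ·) 𝒞 → (⋂₀ 𝒞).Nonempty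

/-!
Enlarging `K` to `K(t)` if its valuation is trivial, completing, and passing to an algebraic closure
with the spectral norm gives an algebraically closed `A ⊇ K` whose value group is dense in `ℝ_{>0}`.
The ultrapower of `A` in the sense of normed fields (bounded sequences, modulo those whose norms
have ultralimit zero) is then the required `L`. Monic polynomials over `A` have roots bounded in
terms of their coefficients, so `L` is algebraically closed and Frobenius is surjective on all of
`L°`. A diagonal argument provides a common point of every decreasing sequence of balls, and chains
of balls reduce to sequences because radii are real. Every positive real is an ultralimit of norms
of `A`, so density of the value group becomes equality with `ℝ_{>0}`.
-/

open Filter Topology Polynomial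
open scoped NNReal

universe u

section SphericallyComplete

theorem closedBall_subset_closedBall_of_isChain {R Γ₀ : Type*} [Ring R]
    [LinearOrderedCommMonoidWithZero Γ₀] {w : Valuation R Γ₀} {𝒞 : Set (Set R)}
    (h𝒞 : IsChain (· ⊆ ·) 𝒞) {c c' : R} {r r' : Γ₀} (hB : {x | w (x - c) ≤ r} ∈ 𝒞)
    (hB' : {x | w (x - c') ≤ r'} ∈ 𝒞) (hr : r ≤ r') :
    {x | w (x - c) ≤ r} ⊆ {x | w (x - c') ≤ r'} := by
  rcases h𝒞.total hB hB' with hsub | hsub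
  · exact hsub
  · intro x (hx : w (x - c) ≤ r)
    have hc : w (c' - c) ≤ r := hsub (show w (c' - c') ≤ r' by simp)
    calc w (x - c') = w ((x - c) - (c' - c)) := by rw [sub_sub_sub_cancel_right]
      _ ≤ r := w.map_sub_le hx hc
      _ ≤ r' := hr

theorem sphericallyComplete_of_forall_seq {L : Type*} [Field L] {w : Valuation L ℝ≥0}
    (hseq : ∀ (c : ℕ → L) (r : ℕ → ℝ≥0), (∀ i j, i ≤ j → w (c i - c j) ≤ r i) →
      ∃ x, ∀ i, w (x - c i) ≤ r i) : SphericallyComplete w := by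
  intro 𝒞 hballs h𝒞
  rcases 𝒞.eq_empty_or_nonempty with rfl | ⟨B₀, hB₀⟩
  · simp
  let radii : Set ℝ≥0 := {r | ∃ c, {x : L | w (x - c) ≤ r} ∈ 𝒞}
  have hradii : radii.Nonempty := by
    obtain ⟨c, r, rfl⟩ := hballs B₀ hB₀
    exact ⟨r, c, hB₀⟩
  have hbdd : BddBelow radii := OrderBot.bddBelow radii
  by_cases hmin : sInf radii ∈ radii
  · obtain ⟨c, hc⟩ := hmin
    refine ⟨c, fun B hB => ?_⟩
    obtain ⟨c', r', rfl⟩ := hballs B hB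
    exact closedBall_subset_closedBall_of_isChain h𝒞 hc hB (csInf_le hbdd ⟨c', hB⟩)
      (show w (c - c) ≤ _ by simp)
  · obtain ⟨r, hr_anti, hr_lim, hr_mem⟩ := exists_seq_tendsto_sInf hradii hbdd
    choose c hc using hr_mem
    obtain ⟨x, hx⟩ := hseq c r fun i j hij => by
      rw [Valuation.map_sub_swap]
      exact closedBall_subset_closedBall_of_isChain h𝒞 (hc j) (hc i) (hr_anti hij)
        (show w (c j - c j) ≤ r j by simp)
    refine ⟨x, fun B hB => ?_⟩
    obtain ⟨c', r', rfl⟩ := hballs B hB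
    have hlt : sInf radii < r' :=
      (csInf_le hbdd ⟨c', hB⟩).lt_of_ne fun h => hmin (h ▸ ⟨c', hB⟩)
    obtain ⟨i, hi⟩ := (hr_lim.eventually_lt_const hlt).exists
    exact closedBall_subset_closedBall_of_isChain h𝒞 (hc i) hB hi.le (hx i)

end SphericallyComplete

section AlgebraicExtension

theorem isUltrametricDist_completion (X : Type*) [PseudoMetricSpace X] [IsUltrametricDist X] :
    IsUltrametricDist (UniformSpace.Completion X) where
  dist_triangle_max x y z := by
    induction x, y, z using UniformSpace.Completion.induction_on₃ with
    | hp => exact isClosed_le (by fun_prop) (by fun_prop)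
    | ih a b c => simpa only [UniformSpace.Completion.dist_eq] using dist_triangle_max a b c

/-- The spectral norm of an algebraic extension of a complete nonarchimedean field, bundled as a
valuation: the unique extension of the norm of the base field. -/
noncomputable def spectralValuation (k L : Type*) [NontriviallyNormedField k] [CompleteSpace k]
    [IsUltrametricDist k] [Field L] [Algebra k L] [Algebra.IsAlgebraic k L] : Valuation L ℝ≥0 :=
  letI := spectralNorm.normedField k L
  haveI : IsUltrametricDist L :=
    IsUltrametricDist.isUltrametricDist_of_isNonarchimedean_norm isNonarchimedean_spectralNorm
  NormedField.valuation

theorem spectralValuation_algebraMap {k L : Type*} [NontriviallyNormedField k] [CompleteSpace k]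
    [IsUltrametricDist k] [Field L] [Algebra k L] [Algebra.IsAlgebraic k L] (x : k) :
    spectralValuation k L (algebraMap k L x) = ‖x‖₊ :=
  NNReal.eq (spectralNorm_extends x)

/-- An `ℝ≥0`-valued valuation on a field, forgetting the ultrametric inequality. -/
noncomputable def absoluteValueOfValuation {K : Type*} [Field K] (v : Valuation K ℝ≥0) :
    AbsoluteValue K ℝ where
  toFun x := v x
  map_mul' x y := by simp
  nonneg' x := NNReal.coe_nonneg _
  eq_zero' x := by simp
  add_le' x y := mod_cast (v.map_add x y).trans (max_le_add_of_nonneg zero_le zero_le)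

theorem exists_isAlgClosed_extension {K : Type u} [Field K] (v : Valuation K ℝ≥0)
    [hv : v.IsNontrivial] :
    ∃ (A : Type u) (_ : Field A) (_ : IsAlgClosed A) (w : Valuation A ℝ≥0) (f : K →+* A),
      ∀ x, w (f x) = v x := by
  let _ : NormedField K := (absoluteValueOfValuation v).toNormedField
  have : IsUltrametricDist K :=
    IsUltrametricDist.isUltrametricDist_of_isNonarchimedean_norm fun x y => mod_cast v.map_add x y
  let K' := UniformSpace.Completion K
  have norm_coe (x : K) : ‖(x : K')‖ = v x := UniformSpace.Completion.norm_coe x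
  have : IsUltrametricDist K' := isUltrametricDist_completion K
  let _ : NontriviallyNormedField K' := NontriviallyNormedField.ofNormNeOne <| by
    obtain ⟨x, hx0, hx1⟩ := hv.exists_val_nontrivial
    refine ⟨(x : K'), norm_ne_zero_iff.1 ?_, ?_⟩ <;> rw [norm_coe] <;> exact_mod_cast ‹_›
  refine ⟨AlgebraicClosure K', inferInstance, inferInstance, spectralValuation K' _,
    (algebraMap K' _).comp UniformSpace.Completion.coeRingHom, fun x => ?_⟩
  exact (spectralValuation_algebraMap (k := K') (x : K')).trans (NNReal.eq (norm_coe x))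

theorem exists_isNontrivial_extension {K : Type u} [Field K] (v : Valuation K ℝ≥0) :
    ∃ (F : Type u) (_ : Field F) (w : Valuation F ℝ≥0) (f : K →+* F),
      w.IsNontrivial ∧ ∀ x, w (f x) = v x := by
  classical
  by_cases hv : v.IsNontrivial
  · exact ⟨K, inferInstance, v, RingHom.id K, hv, fun _ => rfl⟩
  have hv_trivial (x : K) (hx : x ≠ 0) : v x = 1 := by
    by_contra h
    exact hv ⟨x, (v.ne_zero_iff).2 hx, h⟩
  let e := WithZeroMulInt.toNNReal (two_ne_zero (α := ℝ≥0))
  have he : StrictMono e := WithZeroMulInt.toNNReal_strictMono one_lt_two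
  refine ⟨RatFunc K, inferInstance, (RatFunc.inftyValuation K).map e he.monotone, RatFunc.C,
    Valuation.IsNontrivial_iff_exists_one_lt.2 ⟨RatFunc.X, ?_⟩, fun x => ?_⟩
  · rw [Valuation.map_apply, RatFunc.inftyValuation.X, ← map_one e]
    exact he (by simp [← WithZero.exp_zero])
  · rcases eq_or_ne x 0 with rfl | hx
    · simp
    · rw [Valuation.map_apply, RatFunc.inftyValuation.C K hx, map_one, hv_trivial x hx]

theorem exists_isAlgClosed_isNontrivial_extension {K : Type u} [Field K] (v : Valuation K ℝ≥0) :
    ∃ (A : Type u) (_ : Field A) (_ : IsAlgClosed A) (w : Valuation A ℝ≥0) (f : K →+* A),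
      w.IsNontrivial ∧ ∀ x, w (f x) = v x := by
  obtain ⟨F, _, vF, f, hvF, hf⟩ := exists_isNontrivial_extension v
  obtain ⟨A, _, hA, w, g, hg⟩ := exists_isAlgClosed_extension vF
  obtain ⟨x, hx0, hx1⟩ := hvF.exists_val_nontrivial
  exact ⟨A, _, hA, w, g.comp f, ⟨g x, by rwa [hg], by rwa [hg]⟩, fun y => (hg _).trans (hf y)⟩

end AlgebraicExtension

section Valuation

theorem valuation_le_of_isRoot {R Γ₀ : Type*} [Ring R] [LinearOrderedCommGroupWithZero Γ₀]
    (v : Valuation R Γ₀) {q : R[X]} (hq : q.Monic) {z : R} (hz : q.IsRoot z) {C : Γ₀}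
    (hC : 1 ≤ C) (hcoeff : ∀ j < q.natDegree, v (q.coeff j) ≤ C) : v z ≤ C := by
  by_contra! hlt
  have hz1 : 1 < v z := hC.trans_lt hlt
  have hlower : v (∑ j ∈ Finset.range q.natDegree, q.coeff j * z ^ j) < v z ^ q.natDegree := by
    refine v.map_sum_lt (pow_ne_zero _ (zero_lt_one.trans hz1).ne') fun j hj => ?_
    rw [Finset.mem_range] at hj
    calc v (q.coeff j * z ^ j) = v (q.coeff j) * v z ^ j := by rw [map_mul, map_pow]
      _ ≤ C * v z ^ j := by gcongr; exact hcoeff j hj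
      _ < v z * v z ^ j := by
        have := pow_pos (zero_lt_one.trans hz1) j
        gcongr
      _ = v z ^ (j + 1) := (pow_succ' _ _).symm
      _ ≤ v z ^ q.natDegree := pow_le_pow_right₀ hz1.le hj
  have hsum : ∑ j ∈ Finset.range q.natDegree, q.coeff j * z ^ j + z ^ q.natDegree = 0 := by
    rw [← hz.eq_zero, eval_eq_sum_range, Finset.sum_range_succ, hq.coeff_natDegree, one_mul]
  rw [eq_neg_of_add_eq_zero_left hsum, Valuation.map_neg, map_pow] at hlower
  exact hlower.false

theorem exists_pow_eq_of_valuation_le_one {L Γ₀ : Type*} [Field L] [IsAlgClosed L]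
    [LinearOrderedCommMonoidWithZero Γ₀] (w : Valuation L Γ₀) {n : ℕ} (hn : 0 < n) {y : L}
    (hy : w y ≤ 1) : ∃ x, w x ≤ 1 ∧ x ^ n = y := by
  obtain ⟨x, rfl⟩ := IsAlgClosed.exists_pow_nat_eq y hn
  exact ⟨x, (pow_le_one_iff hn.ne').1 (by rwa [← map_pow]), rfl⟩

theorem exists_valuation_mem_Ioo {A : Type*} [Field A] [IsAlgClosed A] (v : Valuation A ℝ≥0)
    [hv : v.IsNontrivial] {r s : ℝ≥0} (hr : 0 < r) (hrs : r < s) : ∃ x, v x ∈ Set.Ioo r s := by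
  obtain ⟨t, ht⟩ := hv.exists_one_lt
  obtain ⟨n, hn⟩ := pow_unbounded_of_one_lt (v t) ((one_lt_div hr).2 hrs)
  have hn0 : n ≠ 0 := by
    rintro rfl
    exact hn.not_gt (by simpa using ht)
  obtain ⟨x, rfl⟩ := IsAlgClosed.exists_pow_nat_eq t (Nat.pos_of_ne_zero hn0)
  rw [map_pow] at ht hn
  have hx1 : 1 < v x := (one_lt_pow_iff hn0).1 ht
  have hxs : v x < s / r := lt_of_pow_lt_pow_left₀ n zero_le hn
  obtain ⟨k, hk_le, hk_lt⟩ := exists_mem_Ico_zpow hr hx1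
  refine ⟨x ^ (k + 1), by rwa [map_zpow₀], ?_⟩
  calc v (x ^ (k + 1)) = v x ^ k * v x := by
        rw [map_zpow₀, zpow_add_one₀ (zero_lt_one.trans hx1).ne']
    _ ≤ r * v x := by gcongr
    _ < r * (s / r) := by gcongr
    _ = s := mul_div_cancel₀ s hr.ne'

end Valuation

theorem exists_tendsto_atTop_forall {ι : Type*} {l : Filter ι} {d : ι → ℕ} (hd : Tendsto d l atTop)
    {P : ℕ → ι → Prop} (hP₀ : ∀ i, P 0 i) (hP : ∀ k, ∀ᶠ i in l, P k i) :
    ∃ κ : ι → ℕ, Tendsto κ l atTop ∧ ∀ i, P (κ i) i := by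
  classical
  refine ⟨fun i => Nat.findGreatest (P · i) (d i), tendsto_atTop.2 fun k => ?_,
    fun i => Nat.findGreatest_spec (P := (P · i)) (Nat.zero_le _) (hP₀ i)⟩
  filter_upwards [hP k, hd.eventually_ge_atTop k] with i hi hki
  exact Nat.le_findGreatest hki hi

section UltraNorm

variable {ι : Type*} {A : ι → Type*}

/-- The ring of norm-bounded families in a product of nonarchimedean rings. -/
def boundedFamilies [∀ i, Ring (A i)] (v : ∀ i, Valuation (A i) ℝ≥0) :
    Subring (∀ i, A i) where
  carrier := {x | ∃ C, ∀ i, v i (x i) ≤ C}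
  mul_mem' := by
    rintro x y ⟨C, hC⟩ ⟨D, hD⟩
    exact ⟨C * D, fun i => by simpa using mul_le_mul' (hC i) (hD i)⟩
  one_mem' := ⟨1, fun i => by simp⟩
  add_mem' := by
    rintro x y ⟨C, hC⟩ ⟨D, hD⟩
    exact ⟨max C D, fun i => ((v i).map_add _ _).trans (max_le_max (hC i) (hD i))⟩
  zero_mem' := ⟨0, fun i => by simp⟩
  neg_mem' := by
    rintro x ⟨C, hC⟩
    exact ⟨C, fun i => by simpa using hC i⟩

section Ring

variable [∀ i, Ring (A i)] {v : ∀ i, Valuation (A i) ℝ≥0}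

theorem tendsto_limUnder_valuation (U : Ultrafilter ι) (x : boundedFamilies v) :
    Tendsto (fun i => v i (x.1 i)) U (𝓝 (limUnder (U : Filter ι) fun i => v i (x.1 i))) := by
  obtain ⟨C, hC⟩ := x.2
  obtain ⟨r, -, hr⟩ := (isCompact_Icc (a := (0 : ℝ≥0)) (b := C)).ultrafilter_le_nhds
    (U.map fun i => v i (x.1 i))
    (le_principal_iff.2 (mem_map.2 (univ_mem' fun i => ⟨zero_le, hC i⟩)))
  exact tendsto_nhds_limUnder ⟨r, hr⟩

/-- The ultralimit of the norms of a bounded family. -/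
noncomputable def ultraNorm (U : Ultrafilter ι) (v : ∀ i, Valuation (A i) ℝ≥0) :
    Valuation (boundedFamilies v) ℝ≥0 where
  toFun x := limUnder (U : Filter ι) fun i => v i (x.1 i)
  map_zero' := Tendsto.limUnder_eq (by simp)
  map_one' := Tendsto.limUnder_eq (by simp)
  map_mul' x y := Tendsto.limUnder_eq <| by
    simpa using (tendsto_limUnder_valuation U x).mul (tendsto_limUnder_valuation U y)
  map_add_le_max' x y :=
    le_of_tendsto_of_tendsto' (tendsto_limUnder_valuation U (x + y))
      ((tendsto_limUnder_valuation U x).max (tendsto_limUnder_valuation U y))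
      fun i => (v i).map_add _ _

variable {U : Ultrafilter ι}

theorem tendsto_ultraNorm (x : boundedFamilies v) :
    Tendsto (fun i => v i (x.1 i)) U (𝓝 (ultraNorm U v x)) :=
  tendsto_limUnder_valuation U x

theorem ultraNorm_eq_of_tendsto {x : boundedFamilies v} {r : ℝ≥0}
    (h : Tendsto (fun i => v i (x.1 i)) U (𝓝 r)) : ultraNorm U v x = r :=
  h.limUnder_eq

/-- The map `d` expresses that `U` is countably incomplete. -/
theorem exists_forall_ultraNorm_sub_le {d : ι → ℕ} (hd : Tendsto d U atTop)
    {b : ℕ → boundedFamilies v} {r : ℕ → ℝ≥0}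
    (hb : ∀ j k, j ≤ k → ultraNorm U v (b j - b k) ≤ r j) :
    ∃ x, ∀ j, ultraNorm U v (x - b j) ≤ r j := by
  obtain ⟨ε, hε_anti, hε_pos, hε_lim⟩ := exists_seq_strictAnti_tendsto (0 : ℝ≥0)
  -- At the index `i` follow the latest center `b k` for which the inequalities with `b 0, …, b k`
  -- already hold in `A i`, up to an error `ε k`.
  obtain ⟨κ, hκ_lim, hκ⟩ := exists_tendsto_atTop_forall hd
    (P := fun k i => ∀ j ≤ k, v i ((b j).1 i - (b k).1 i) ≤ r j + ε k)
    (fun i j hj => by simp [Nat.le_zero.1 hj])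
    (fun k => (eventually_all_finite (Set.finite_Iic k)).2 fun j hj =>
      ((tendsto_ultraNorm (b j - b k)).eventually_lt_const
        ((hb j k hj).trans_lt (lt_add_of_pos_right _ (hε_pos k)))).mono fun _ => le_of_lt)
  have hbdd : (fun i => (b (κ i)).1 i) ∈ boundedFamilies v := by
    obtain ⟨C, hC⟩ := (b 0).2
    refine ⟨max C (r 0 + ε 0), fun i => ?_⟩
    calc v i ((b (κ i)).1 i) = v i ((b 0).1 i - ((b 0).1 i - (b (κ i)).1 i)) := by
          rw [sub_sub_cancel]
      _ ≤ max (v i ((b 0).1 i)) (v i ((b 0).1 i - (b (κ i)).1 i)) := (v i).map_sub _ _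
      _ ≤ max C (r 0 + ε 0) := max_le_max (hC i) <| (hκ i 0 (Nat.zero_le _)).trans <| by
          gcongr
          exact hε_anti.antitone (Nat.zero_le _)
  refine ⟨⟨_, hbdd⟩, fun j => le_of_tendsto_of_tendsto (tendsto_ultraNorm _)
    (by simpa using (hε_lim.comp hκ_lim).const_add (r j)) ?_⟩
  filter_upwards [hκ_lim.eventually_ge_atTop j] with i hi
  exact ((v i).map_sub_swap _ _).trans_le (hκ i j hi)

end Ring

section Field

variable [∀ i, Field (A i)] {v : ∀ i, Valuation (A i) ℝ≥0} {U : Ultrafilter ι}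

theorem exists_mul_sub_one_mem_supp_ultraNorm {x : boundedFamilies v} (hx : ultraNorm U v x ≠ 0) :
    ∃ y, x * y - 1 ∈ (ultraNorm U v).supp := by
  classical
  let r := ultraNorm U v x / 2
  have hr : 0 < r := half_pos (pos_iff_ne_zero.2 hx)
  let y : ∀ i, A i := fun i => if r < v i (x.1 i) then (x.1 i)⁻¹ else 0
  have hy : y ∈ boundedFamilies v := by
    refine ⟨r⁻¹, fun i => ?_⟩
    by_cases h : r < v i (x.1 i)
    · simpa [y, h] using inv_anti₀ hr h.le
    · simp [y, h]
  refine ⟨⟨y, hy⟩, (Valuation.mem_supp_iff _ _).2 (ultraNorm_eq_of_tendsto ?_)⟩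
  refine tendsto_const_nhds.congr' ?_
  filter_upwards [(tendsto_ultraNorm x).eventually_const_lt (NNReal.half_lt_self hx)]
    with i (hi : r < v i (x.1 i))
  have hxi : x.1 i ≠ 0 := (v i).ne_zero_iff.1 (hr.trans hi).ne'
  simp [y, hi, hxi]

instance isMaximal_supp_ultraNorm : (ultraNorm U v).supp.IsMaximal := by
  refine Ideal.isMaximal_iff.2 ⟨by simp [Valuation.mem_supp_iff], fun J x hJ hx hxJ => ?_⟩
  obtain ⟨y, hy⟩ := exists_mul_sub_one_mem_supp_ultraNorm hx
  simpa only [sub_sub_cancel] using J.sub_mem (J.mul_mem_right y hxJ) (hJ hy)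

theorem exists_isRoot_boundedFamilies [∀ i, IsAlgClosed (A i)] {q : (boundedFamilies v)[X]}
    (hq : q.Monic) (hdeg : q.natDegree ≠ 0) : ∃ z, q.IsRoot z := by
  let π (i : ι) : boundedFamilies v →+* A i :=
    (Pi.evalRingHom A i).comp (boundedFamilies v).subtype
  choose z hz using fun i => IsAlgClosed.exists_root (q.map (π i)) fun h =>
    hdeg (by rw [← hq.natDegree_map (π i)]; exact natDegree_eq_zero_iff_degree_le_zero.2 h.le)
  choose C hC using fun j => (q.coeff j).2
  have hbdd : z ∈ boundedFamilies v := by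
    refine ⟨max 1 ((Finset.range q.natDegree).sup C), fun i => ?_⟩
    refine valuation_le_of_isRoot (v i) (hq.map (π i)) (hz i) (le_max_left _ _) fun j hj => ?_
    rw [hq.natDegree_map] at hj
    rw [coeff_map]
    exact (hC j i).trans ((Finset.le_sup (Finset.mem_range.2 hj)).trans (le_max_right _ _))
  refine ⟨⟨z, hbdd⟩, Subtype.ext (funext fun i => ?_)⟩
  exact (eval_map_apply (π i) _).symm.trans (hz i)

end Field

end UltraNorm

/-- The ultraproduct of nonarchimedean fields: bounded families modulo those whose norms have
ultralimit zero. -/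
abbrev NAUltraproduct {ι : Type*} (U : Ultrafilter ι) {A : ι → Type*} [∀ i, Field (A i)]
    (v : ∀ i, Valuation (A i) ℝ≥0) : Type _ :=
  boundedFamilies v ⧸ (ultraNorm U v).supp

namespace NAUltraproduct

variable {ι : Type*} {U : Ultrafilter ι} {A : ι → Type*} [∀ i, Field (A i)]
  {v : ∀ i, Valuation (A i) ℝ≥0}

noncomputable instance : Field (NAUltraproduct U v) :=
  Ideal.Quotient.field _

/-- The norm of an ultraproduct, the ultralimit of the norms of the components. -/
noncomputable def valuation (U : Ultrafilter ι) (v : ∀ i, Valuation (A i) ℝ≥0) :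
    Valuation (NAUltraproduct U v) ℝ≥0 :=
  (ultraNorm U v).onQuot le_rfl

theorem valuation_mk (x : boundedFamilies v) :
    valuation U v (Ideal.Quotient.mk _ x) = ultraNorm U v x :=
  rfl

theorem exists_ringHom_valuation_eq {K : Type*} [Ring K] {vK : Valuation K ℝ≥0}
    {f : ∀ i, K →+* A i} (hf : ∀ i x, v i (f i x) = vK x) :
    ∃ g : K →+* NAUltraproduct U v, ∀ x, valuation U v (g x) = vK x := by
  refine ⟨(Ideal.Quotient.mk _).comp <| (RingHom.pi f).codRestrict (boundedFamilies v)
    fun x => ⟨vK x, fun i => (hf i x).le⟩, fun x => (valuation_mk _).trans ?_⟩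
  exact ultraNorm_eq_of_tendsto (tendsto_const_nhds.congr fun i => (hf i x).symm)

theorem isAlgClosed [∀ i, IsAlgClosed (A i)] : IsAlgClosed (NAUltraproduct U v) := by
  refine IsAlgClosed.of_exists_root _ fun q hq hirr => ?_
  obtain ⟨Q, rfl, hdeg, hQ⟩ := lifts_and_natDegree_eq_and_monic
    (mem_lifts_of_surjective Ideal.Quotient.mk_surjective q) hq
  obtain ⟨z, hz⟩ := exists_isRoot_boundedFamilies hQ (hdeg ▸ hirr.natDegree_pos.ne')
  exact ⟨_, hz.map⟩

theorem sphericallyComplete {d : ι → ℕ} (hd : Tendsto d U atTop) :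
    SphericallyComplete (valuation U v) := by
  refine sphericallyComplete_of_forall_seq fun c r hc => ?_
  choose b hb using fun j => Ideal.Quotient.mk_surjective (c j)
  simp only [← hb, ← map_sub, valuation_mk] at hc
  obtain ⟨x, hx⟩ := exists_forall_ultraNorm_sub_le hd hc
  exact ⟨Ideal.Quotient.mk _ x, by simpa only [← hb, ← map_sub, valuation_mk] using hx⟩

theorem exists_valuation_eq [∀ i, IsAlgClosed (A i)] [∀ i, (v i).IsNontrivial] {d : ι → ℕ}
    (hd : Tendsto d U atTop) {r : ℝ≥0} (hr : 0 < r) : ∃ x, valuation U v x = r := by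
  obtain ⟨s, hs_anti, hs_gt, hs_lim⟩ := exists_seq_strictAnti_tendsto r
  choose x hx_gt hx_lt using fun i => exists_valuation_mem_Ioo (v i) hr (hs_gt (d i))
  have hbdd : x ∈ boundedFamilies v :=
    ⟨s 0, fun i => (hx_lt i).le.trans (hs_anti.antitone (Nat.zero_le _))⟩
  exact ⟨Ideal.Quotient.mk _ ⟨x, hbdd⟩, (valuation_mk _).trans <| ultraNorm_eq_of_tendsto <|
    tendsto_of_tendsto_of_tendsto_of_le_of_le tendsto_const_nhds (hs_lim.comp hd)
      (fun i => (hx_gt i).le) fun i => (hx_lt i).le⟩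

end NAUltraproduct

theorem exists_sphericallyComplete_perfectoid_extension_general {K : Type u} [Field K]
    (v : Valuation K ℝ≥0) :
    ∃ (L : Type u) (_ : Field L) (w : Valuation L ℝ≥0) (f : K →+* L),
      (∀ x, w (f x) = v x) ∧ IsAlgClosed L ∧ SphericallyComplete w ∧
        ∀ r, 0 < r → ∃ x, w x = r := by
  obtain ⟨A, _, _, w, f, _, hf⟩ := exists_isAlgClosed_isNontrivial_extension v
  have hd : Tendsto id (hyperfilter ℕ : Filter ℕ) atTop := Nat.hyperfilter_le_atTop
  obtain ⟨g, hg⟩ := NAUltraproduct.exists_ringHom_valuation_eq (U := hyperfilter ℕ) fun _ => hf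
  exact ⟨_, inferInstance, _, g, hg, NAUltraproduct.isAlgClosed,
    NAUltraproduct.sphericallyComplete hd, fun _ => NAUltraproduct.exists_valuation_eq hd⟩

/-- Let `p` be a prime and `K` a field with a nontrivial nonarchimedean multiplicative
norm with `‖p‖ < 1`.  Then there is a nonarchimedean field `L` and an isometric ring
embedding `K → L` such that `L` is spherically complete, the value group of `L` is all of
`ℝ_{>0}`, and Frobenius is surjective on `L°/ϖ^p` for every pseudo-uniformizer `ϖ` with
`‖p‖ ≤ ‖ϖ‖^p` — i.e. `L` is a perfectoid field. -/
theorem exists_sphericallyComplete_perfectoid_extension (p : ℕ) (hp : p.Prime)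
    (K : Type) [Field K] (v : Valuation K NNReal)
    (hnt : ∃ x : K, x ≠ 0 ∧ v x ≠ 1)
    (hchar : v (p : K) < 1) :
    ∃ (L : NAField) (f : K →+* L.carrier),
      Function.Injective f ∧
      (∀ x : K, L.val (f x) = v x) ∧
      SphericallyComplete L.val ∧
      (∀ r : NNReal, 0 < r → ∃ x : L.carrier, L.val x = r) ∧
      (∀ ϖ : L.carrier, 0 < L.val ϖ → L.val ϖ < 1 →
        L.val ((p : L.carrier)) ≤ (L.val ϖ) ^ p →
        ∀ y : L.carrier, L.val y ≤ 1 →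
          ∃ x : L.carrier, L.val x ≤ 1 ∧ L.val (y - x ^ p) ≤ (L.val ϖ) ^ p) := by
  obtain ⟨L, _, w, f, hf, _, hL, hsurj⟩ := exists_sphericallyComplete_perfectoid_extension_general v
  refine ⟨⟨L, w⟩, f, f.injective, hf, hL, hsurj, fun ϖ _ _ _ y hy => ?_⟩
  obtain ⟨x, hx, rfl⟩ := exists_pow_eq_of_valuation_le_one w hp.pos hy
  exact ⟨x, hx, by simp⟩
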